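/- For every integer k ≥ 1, the (2k−1)-st derivative of the tangent at 0 satisfies (d/dθ)^{2k−1} tan θ |_{θ=0} = ((−1)^{k+1}/(2k)) · 2^{2k} (2^{2k} − 1) B_{2k} (these are the tangent numbers). -/

import Mathlib

/-!
The identity is obtained from formal Taylor series at `0` of functions `ℝ → ℂ`.
With `E = exp (2iθ)`, Euler's formula gives `tan θ * (E + 1) = -i (E - 1)` near `0`, and since
taking Taylor series is multiplicative (Leibniz rule), the same relation holds in `ℂ⟦X⟧` between
the Taylor series `T` of `tan` and `E = e^{2iX}`. Writing `B(X) = X / (e^X - 1)` for the generating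
series of the Bernoulli numbers, `B(2iX) (E - 1) = 2iX` and `B(4iX) (E² - 1) = 4iX`. As `ℂ⟦X⟧` is a
domain, multiplying by `E² - 1` shows `X T = B(2iX) - B(4iX) - iX`, and the formula is the
comparison of the coefficients of `X ^ (2k)`.
-/

open PowerSeries

/-- The formal Taylor series at `0` of a function of a real variable with complex values. -/
noncomputable def taylorSeriesZero (f : ℝ → ℂ) : PowerSeries ℂ :=
  PowerSeries.mk fun n => iteratedDeriv n f 0 / (n.factorial : ℂ)

/-- Multiplicativity of the Taylor series: this is the Leibniz rule. -/
lemma taylorSeriesZero_mul {f g : ℝ → ℂ} (hf : ∀ n : ℕ, ContDiffAt ℝ n f 0)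
    (hg : ∀ n : ℕ, ContDiffAt ℝ n g 0) :
    taylorSeriesZero (fun θ => f θ * g θ) = taylorSeriesZero f * taylorSeriesZero g := by
  ext n
  simp only [taylorSeriesZero, coeff_mk, coeff_mul]
  rw [iteratedDeriv_fun_mul (hf n) (hg n),
    Finset.Nat.sum_antidiagonal_eq_sum_range_succ_mk, Finset.sum_div]
  refine Finset.sum_congr rfl fun i hi => ?_
  have hi' : i ≤ n := Nat.lt_succ_iff.mp (Finset.mem_range.mp hi)
  rw [Nat.cast_choose ℂ hi']
  have h1 : (n.factorial : ℂ) ≠ 0 := by exact_mod_cast n.factorial_ne_zero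
  have h2 : (i.factorial : ℂ) ≠ 0 := by exact_mod_cast i.factorial_ne_zero
  have h3 : ((n - i).factorial : ℂ) ≠ 0 := by exact_mod_cast (n - i).factorial_ne_zero
  field_simp

lemma iteratedDeriv_const_mul_cexp_ofReal (a c : ℂ) (n : ℕ) :
    iteratedDeriv n (fun θ : ℝ => a * Complex.exp (c * θ)) =
      fun θ : ℝ => a * c ^ n * Complex.exp (c * θ) := by
  induction n with
  | zero => simp
  | succ n ih =>
    rw [iteratedDeriv_succ, ih]
    funext θ
    have h : HasDerivAt (fun θ : ℝ => c * (θ : ℂ)) (c * 1) θ :=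
      (Complex.ofRealCLM.hasDerivAt (x := θ)).const_mul c
    rw [(h.cexp.const_mul (a * c ^ n)).deriv]
    ring

lemma contDiff_const_mul_cexp_ofReal (a c : ℂ) (n : WithTop ℕ∞) :
    ContDiff ℝ n (fun θ : ℝ => a * Complex.exp (c * θ)) := by
  have h : ContDiff ℝ n (fun θ : ℝ => (θ : ℂ)) := Complex.ofRealCLM.contDiff
  exact contDiff_const.mul (contDiff_const.mul h).cexp

lemma taylorSeriesZero_cexp_add_const (a c d : ℂ) :
    taylorSeriesZero (fun θ : ℝ => a * Complex.exp (c * θ) + d) =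
      C a * rescale c (exp ℂ) + C d := by
  ext n
  simp only [taylorSeriesZero, coeff_mk]
  rw [iteratedDeriv_fun_add (contDiff_const_mul_cexp_ofReal a c n).contDiffAt contDiffAt_const,
    iteratedDeriv_const_mul_cexp_ofReal, iteratedDeriv_const]
  rw [map_add, coeff_C_mul, coeff_rescale, coeff_exp, coeff_C]
  rcases n with _ | n
  · simp
  · simp [mul_assoc, div_eq_mul_inv]

lemma contDiffAt_ofReal_tan (n : ℕ) :
    ContDiffAt ℝ n (fun θ : ℝ => ((Real.tan θ : ℝ) : ℂ)) 0 :=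
  Complex.ofRealCLM.contDiff.contDiffAt.comp (0 : ℝ) (Real.contDiffAt_tan.mpr (by simp))

lemma iteratedDeriv_ofReal_tan (n : ℕ) :
    iteratedDeriv n (fun θ : ℝ => ((Real.tan θ : ℝ) : ℂ)) 0 =
      ((iteratedDeriv n Real.tan 0 : ℝ) : ℂ) := by
  have h := Complex.ofRealCLM.iteratedFDeriv_comp_left (x := (0 : ℝ)) (n := n) (f := Real.tan)
    (Real.contDiffAt_tan.mpr (by simp)) (i := n) le_rfl
  rw [iteratedDeriv_eq_iteratedFDeriv, iteratedDeriv_eq_iteratedFDeriv]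
  exact congrArg (fun m => m fun _ => (1 : ℝ)) h

/-- Euler's formula for the tangent. Where `cos θ = 0` one has `exp (2iθ) = -1`, so the left
side vanishes while the right side is `2i`. -/
lemma ofReal_tan_mul_cexp_add_one {θ : ℝ} (h : Real.cos θ ≠ 0) :
    ((Real.tan θ : ℝ) : ℂ) * (1 * Complex.exp (2 * Complex.I * θ) + 1) =
      -Complex.I * Complex.exp (2 * Complex.I * θ) + Complex.I := by
  have hc : Complex.cos θ ≠ 0 := by
    rw [← Complex.ofReal_cos]; exact_mod_cast h
  have he : Complex.exp (2 * Complex.I * θ) =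
      (Complex.cos θ + Complex.sin θ * Complex.I) ^ 2 := by
    rw [← Complex.exp_mul_I, ← Complex.exp_nat_mul]
    congr 1
    push_cast
    ring
  rw [he, Complex.ofReal_tan, Complex.tan_eq_sin_div_cos]
  have hI := Complex.I_sq
  have hs := Complex.sin_sq_add_cos_sq (θ : ℂ)
  generalize Complex.sin θ = s at *
  generalize Complex.cos θ = c at *
  field_simp
  grind

/-- The relation `tan * (E + 1) = -i (E - 1)` at the level of formal Taylor series. -/
lemma taylorSeriesZero_tan_mul :
    taylorSeriesZero (fun θ : ℝ => ((Real.tan θ : ℝ) : ℂ)) *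
        (rescale (2 * Complex.I) (exp ℂ) + 1) =
      -C Complex.I * (rescale (2 * Complex.I) (exp ℂ) - 1) := by
  have hE := taylorSeriesZero_cexp_add_const 1 (2 * Complex.I) 1
  have hR := taylorSeriesZero_cexp_add_const (-Complex.I) (2 * Complex.I) Complex.I
  simp only [map_one, map_neg] at hE hR
  rw [one_mul] at hE
  rw [← hE, ← taylorSeriesZero_mul contDiffAt_ofReal_tan fun n =>
    ((contDiff_const_mul_cexp_ofReal 1 _ n).add contDiff_const).contDiffAt]
  have hev : (fun θ : ℝ => ((Real.tan θ : ℝ) : ℂ) * (1 * Complex.exp (2 * Complex.I * θ) + 1))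
      =ᶠ[nhds 0] fun θ : ℝ => -Complex.I * Complex.exp (2 * Complex.I * θ) + Complex.I := by
    have hne : ∀ᶠ θ : ℝ in nhds 0, Real.cos θ ≠ 0 :=
      Real.continuous_cos.continuousAt.eventually_ne (by simp)
    filter_upwards [hne] with θ hθ using ofReal_tan_mul_cexp_add_one hθ
  have hT : taylorSeriesZero
      (fun θ : ℝ => ((Real.tan θ : ℝ) : ℂ) * (1 * Complex.exp (2 * Complex.I * θ) + 1)) =
      taylorSeriesZero
        (fun θ : ℝ => -Complex.I * Complex.exp (2 * Complex.I * θ) + Complex.I) := by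
    ext n
    simp only [taylorSeriesZero, coeff_mk]
    rw [hev.iteratedDeriv_eq n]
  rw [hT, hR]
  ring

lemma rescale_bernoulliPowerSeries_mul (c : ℂ) :
    rescale c (bernoulliPowerSeries ℂ) * (rescale c (exp ℂ) - 1) = C c * X := by
  have h := congrArg (rescale c) (bernoulliPowerSeries_mul_exp_sub_one ℂ)
  simpa [rescale_X] using h

lemma X_mul_taylorSeriesZero_tan :
    X * taylorSeriesZero (fun θ : ℝ => ((Real.tan θ : ℝ) : ℂ)) =
      rescale (2 * Complex.I) (bernoulliPowerSeries ℂ) -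
        rescale (4 * Complex.I) (bernoulliPowerSeries ℂ) - C Complex.I * X := by
  have hT := taylorSeriesZero_tan_mul
  have h1 := rescale_bernoulliPowerSeries_mul (2 * Complex.I)
  have h2 := rescale_bernoulliPowerSeries_mul (4 * Complex.I)
  have hsq : rescale (4 * Complex.I) (exp ℂ) = rescale (2 * Complex.I) (exp ℂ) ^ 2 := by
    rw [sq, exp_mul_exp_eq_exp_add]
    congr 2
    ring
  have hc4 : (C (4 * Complex.I) : PowerSeries ℂ) = 4 * C Complex.I := by
    rw [map_mul]; congr 1
  have hc2 : (C (2 * Complex.I) : PowerSeries ℂ) = 2 * C Complex.I := by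
    rw [map_mul]; congr 1
  have hne : rescale (2 * Complex.I) (exp ℂ) ^ 2 - 1 ≠ 0 := by
    intro h0
    rw [hsq, h0, mul_zero] at h2
    have := congrArg (coeff 1) h2
    simp at this
  rw [hsq, hc4] at h2
  rw [hc2] at h1
  refine mul_right_cancel₀ hne ?_
  generalize rescale (2 * Complex.I) (exp ℂ) = E at *
  linear_combination X * (E - 1) * hT - (E + 1) * h1 + h2

theorem iteratedDeriv_tan_zero_odd (k : ℕ) (hk : 1 ≤ k) :
    iteratedDeriv (2 * k - 1) Real.tan 0 =
      (-1 : ℝ) ^ (k + 1) / (2 * k : ℝ) * 2 ^ (2 * k) * (2 ^ (2 * k) - 1) *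
        ((bernoulli (2 * k) : ℚ) : ℝ) := by
  obtain ⟨m, rfl⟩ : ∃ m, k = m + 1 := ⟨k - 1, by omega⟩
  have hidx : 2 * (m + 1) - 1 = 2 * m + 1 := by omega
  have h := congrArg (coeff (2 * m + 1 + 1)) X_mul_taylorSeriesZero_tan
  rw [coeff_succ_X_mul, map_sub, map_sub, coeff_succ_mul_X, coeff_rescale, coeff_rescale,
    coeff_C, if_neg (by omega)] at h
  simp only [taylorSeriesZero, bernoulliPowerSeries, coeff_mk, iteratedDeriv_ofReal_tan] at h
  rw [show 2 * m + 1 + 1 = 2 * (m + 1) by ring] at h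
  have h2 : (2 * Complex.I) ^ (2 * (m + 1)) = 2 ^ (2 * (m + 1)) * (-1) ^ (m + 1) := by
    rw [mul_pow, pow_mul Complex.I, Complex.I_sq]
  have h4 : (4 * Complex.I) ^ (2 * (m + 1)) =
      2 ^ (2 * (m + 1)) * 2 ^ (2 * (m + 1)) * (-1) ^ (m + 1) := by
    rw [mul_pow, pow_mul Complex.I, Complex.I_sq, ← mul_pow]
    norm_num
  have hfac : ((2 * (m + 1)).factorial : ℂ) = (2 * (m + 1)) * ((2 * m + 1).factorial : ℂ) := by
    rw [show 2 * (m + 1) = 2 * m + 1 + 1 by ring, Nat.factorial_succ]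
    push_cast
    ring
  have hf0 : ((2 * m + 1).factorial : ℂ) ≠ 0 := by exact_mod_cast Nat.factorial_ne_zero _
  have hm0 : ((m : ℂ) + 1) ≠ 0 := by exact_mod_cast m.succ_ne_zero
  rw [h2, h4, map_div₀, map_natCast, hfac, eq_ratCast] at h
  rw [hidx]
  apply Complex.ofReal_injective
  push_cast
  field_simp at h ⊢
  rw [pow_succ (-1 : ℂ) (m + 1)]
  linear_combination h
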